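/- arXiv:1208.0085 — 3 statements merged into one kernel-verified Lean document; each statement's English description precedes it below -/
import Mathlib

section
/- For every pair (r,s) of positive integers with |r - s| ≤ 1 and (r,s) ≠ (1,2), there exists a connected finite simple graph G with Max(G) = r and Min(G) = s. -/
/-!
On a graph with an even number `2k` of vertices, the question is who wins the fight over a perfect
matching, Max wanting it and Min not. If no independent set has more than three vertices, the
loser of that fight still gets within one edge: the value of the game is `k` or `k - 1`. Hence it
suffices to find connected graphs of this kind with a prescribed winner for either starting player.

* `(r, r)`: in the complete graph on `2r` vertices the matching is always perfect.
* `(r, r - 1)`: take two cliques joined by one edge `pq`. Without `pq` the outcome would be fixed,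
  perfect exactly when both cliques are even (`perfect_twoCliques`). The first mover either plays
  `pq`, which flips both parities, or plays another edge at `p` or `q`, which freezes them, and so
  decides the outcome (`moverWins_bridge`). A single vertex attached to a clique is enough.
* `(r, r + 1)` with `r ≥ 2`: take two cliques of `r + 1` vertices, remove an edge `p₁p₂` from the
  one and `q₁q₂` from the other, and add the edges `p₁q₁` and `p₂q₂` (`DoubleBridge`). Whoever moves
  first loses (`DoubleBridge.outcome`): a first move touching some `pᵢ` or `qᵢ` leaves a graph with
  one bridge, where the next player decides; after any other first move the next player answers
  on the opposite side, which restores a smaller graph of the same shape, until that shape is so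
  small that the answer is found by hand (`DoubleBridge.moverWins_two_four`).
-/

open Finset

variable {V : Type*} [DecidableEq V]

/-- The legal moves in the matching game on `G` when the set of remaining
(undeleted) vertices is `s`: ordered pairs of adjacent remaining vertices. -/
def matchPlays (G : SimpleGraph V) [DecidableRel G.Adj] (s : Finset V) :
    Finset (V × V) :=
  (s ×ˢ s).filter fun p => G.Adj p.1 p.2

lemma matchPlays_card {G : SimpleGraph V} [DecidableRel G.Adj] {s : Finset V}
    {p : V × V} (hp : p ∈ matchPlays G s) :
    (s \ {p.1, p.2}).card < s.card := by
  simp only [matchPlays, mem_filter, mem_product] at hp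
  refine card_lt_card (Finset.sdiff_ssubset ?_ ⟨p.1, mem_insert_self _ _⟩)
  intro x hx
  rcases mem_insert.mp hx with h | h
  · exact h ▸ hp.1.1
  · exact (mem_singleton.mp h) ▸ hp.1.2

/-- The value of the matching game on the subgraph of `G` induced by the vertex
set `s`, with Max to move if `maxTurn = true` and Min to move otherwise:
the number of *further* edges added to the matching under optimal play. -/
def gameValue (G : SimpleGraph V) [DecidableRel G.Adj] (maxTurn : Bool)
    (s : Finset V) : ℕ :=
  if h : (matchPlays G s).Nonempty then
    if maxTurn then
      (matchPlays G s).attach.sup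
        fun p => 1 + gameValue G false (s \ {p.1.1, p.1.2})
    else
      (matchPlays G s).attach.inf' (by simpa using h)
        fun p => 1 + gameValue G true (s \ {p.1.1, p.1.2})
  else 0
termination_by s.card
decreasing_by
  · exact matchPlays_card p.2
  · exact matchPlays_card p.2

/-- The Max-start game matching number `Max(G)`. -/
noncomputable def gameMax [Fintype V] (G : SimpleGraph V) : ℕ :=
  letI : DecidableRel G.Adj := Classical.decRel _
  gameValue G true Finset.univ

/-- The Min-start game matching number `Min(G)`. -/
noncomputable def gameMin [Fintype V] (G : SimpleGraph V) : ℕ :=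
  letI : DecidableRel G.Adj := Classical.decRel _
  gameValue G false Finset.univ

/-- `M` is a matching in `G`: a set of edges of `G` that are pairwise
vertex-disjoint. -/
def IsMatchingSet (G : SimpleGraph V) (M : Finset (Sym2 V)) : Prop :=
  (∀ e ∈ M, e ∈ G.edgeSet) ∧
    ∀ e ∈ M, ∀ f ∈ M, e ≠ f → ∀ v : V, v ∈ e → v ∉ f

/-- The matching number `α'(G)`: the maximum size of a matching in `G`. -/
noncomputable def matchingNumber (G : SimpleGraph V) : ℕ :=
  sSup {n | ∃ M : Finset (Sym2 V), IsMatchingSet G M ∧ M.card = n}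

/-! ### Perfect play -/

/-- Max achieves a perfect matching of the remaining vertex set `s`; `t` tells whether Max is
to move. -/
def PerfectPlay (G : SimpleGraph V) [DecidableRel G.Adj] (t : Bool) (s : Finset V) : Prop :=
  s.card ≤ 2 * gameValue G t s

/-- Whoever moves first decides whether the final matching is perfect. -/
def MoverWins (G : SimpleGraph V) [DecidableRel G.Adj] (s : Finset V) : Prop :=
  PerfectPlay G true s ∧ ¬ PerfectPlay G false s

/-- Whoever moves first loses the fight over a perfect matching (zugzwang). -/
def MoverLoses (G : SimpleGraph V) [DecidableRel G.Adj] (s : Finset V) : Prop :=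
  ¬ PerfectPlay G true s ∧ PerfectPlay G false s

/-- The number of vertices of `s` on side `b` of the two-colouring `c`. -/
def sideCard (c : V → Bool) (b : Bool) (s : Finset V) : ℕ :=
  (s.filter fun v => c v = b).card

section Game

variable {G : SimpleGraph V} [DecidableRel G.Adj] {s : Finset V}

lemma mem_matchPlays {p : V × V} :
    p ∈ matchPlays G s ↔ p.1 ∈ s ∧ p.2 ∈ s ∧ G.Adj p.1 p.2 := by
  simp [matchPlays, and_assoc]

lemma card_sdiff_edge {u v : V} (hu : u ∈ s) (hv : v ∈ s) (h : u ≠ v) :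
    (s \ {u, v}).card + 2 = s.card := by
  have h1 : ({u, v} : Finset V) ⊆ s := by
    intro x hx
    simp only [mem_insert, mem_singleton] at hx
    rcases hx with rfl | rfl <;> assumption
  have h2 := card_sdiff_add_card_eq_card h1
  rwa [card_pair h] at h2

lemma le_gameValue_true {u v : V} (hu : u ∈ s) (hv : v ∈ s) (h : G.Adj u v) :
    1 + gameValue G false (s \ {u, v}) ≤ gameValue G true s := by
  have hm : (u, v) ∈ matchPlays G s := mem_matchPlays.2 ⟨hu, hv, h⟩
  rw [gameValue.eq_def G true s, dif_pos ⟨_, hm⟩, if_pos rfl]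
  exact le_sup (f := fun p : matchPlays G s =>
    1 + gameValue G false (s \ {p.1.1, p.1.2})) (mem_attach _ ⟨(u, v), hm⟩)

lemma gameValue_false_le {u v : V} (hu : u ∈ s) (hv : v ∈ s) (h : G.Adj u v) :
    gameValue G false s ≤ 1 + gameValue G true (s \ {u, v}) := by
  have hm : (u, v) ∈ matchPlays G s := mem_matchPlays.2 ⟨hu, hv, h⟩
  rw [gameValue.eq_def G false s, dif_pos ⟨_, hm⟩, if_neg (by simp)]
  exact inf'_le (f := fun p : matchPlays G s =>
    1 + gameValue G true (s \ {p.1.1, p.1.2})) (mem_attach _ ⟨(u, v), hm⟩)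

/-- Whoever is to move, the value is attained by some legal move, unless there is none. -/
lemma gameValue_cases (t : Bool) :
    (gameValue G t s = 0 ∧ ∀ u ∈ s, ∀ v ∈ s, ¬ G.Adj u v) ∨
      ∃ u ∈ s, ∃ v ∈ s, G.Adj u v ∧
        gameValue G t s = 1 + gameValue G (!t) (s \ {u, v}) := by
  by_cases hne : (matchPlays G s).Nonempty
  · right
    have hne' : (matchPlays G s).attach.Nonempty := by simpa using hne
    cases t
    · obtain ⟨p, -, hp⟩ := exists_mem_eq_inf' hne'
        (fun p : matchPlays G s => 1 + gameValue G true (s \ {p.1.1, p.1.2}))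
      obtain ⟨h1, h2, h3⟩ := mem_matchPlays.1 p.2
      refine ⟨_, h1, _, h2, h3, ?_⟩
      rw [gameValue.eq_def G false s, dif_pos hne, if_neg (by simp)]
      exact hp
    · obtain ⟨p, -, hp⟩ := exists_mem_eq_sup _ hne'
        (fun p : matchPlays G s => 1 + gameValue G false (s \ {p.1.1, p.1.2}))
      obtain ⟨h1, h2, h3⟩ := mem_matchPlays.1 p.2
      refine ⟨_, h1, _, h2, h3, ?_⟩
      rw [gameValue.eq_def G true s, dif_pos hne, if_pos rfl]
      exact hp
  · left
    refine ⟨by rw [gameValue.eq_def, dif_neg hne], fun u hu v hv h => hne ⟨(u, v), ?_⟩⟩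
    exact mem_matchPlays.2 ⟨hu, hv, h⟩

lemma two_mul_gameValue_le (t : Bool) : 2 * gameValue G t s ≤ s.card := by
  induction hn : s.card using Nat.strong_induction_on generalizing s t with
  | _ n ih =>
    rcases gameValue_cases (G := G) (s := s) t with ⟨h, -⟩ | ⟨u, hu, v, hv, h, e⟩
    · omega
    · have hc := card_sdiff_edge hu hv h.ne
      have := ih _ (by omega) (s := s \ {u, v}) (!t) rfl
      omega

/-- A finished game leaves an independent set, so the matching misses at most three vertices
if the independence number is at most three. -/
lemma card_le_two_mul_gameValue_add (t : Bool)
    (hs : ∀ I ⊆ s, (∀ u ∈ I, ∀ v ∈ I, ¬ G.Adj u v) → I.card ≤ 3) :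
    s.card ≤ 2 * gameValue G t s + 3 := by
  induction hn : s.card using Nat.strong_induction_on generalizing s t with
  | _ n ih =>
    rcases gameValue_cases (G := G) (s := s) t with ⟨h, h'⟩ | ⟨u, hu, v, hv, h, e⟩
    · have := hs s subset_rfl h'
      omega
    · have hc := card_sdiff_edge hu hv h.ne
      have := ih _ (by omega) (s := s \ {u, v}) (!t)
        (fun I hI => hs I (hI.trans sdiff_subset)) rfl
      omega

lemma PerfectPlay.of_move {u v : V} (hu : u ∈ s) (hv : v ∈ s) (h : G.Adj u v)
    (hw : PerfectPlay G false (s \ {u, v})) : PerfectPlay G true s := by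
  have := le_gameValue_true hu hv h
  have := card_sdiff_edge hu hv h.ne
  unfold PerfectPlay at *
  omega

lemma not_perfect_of_move {u v : V} (hu : u ∈ s) (hv : v ∈ s) (h : G.Adj u v)
    (hw : ¬ PerfectPlay G true (s \ {u, v})) : ¬ PerfectPlay G false s := by
  have := gameValue_false_le hu hv h
  have := card_sdiff_edge hu hv h.ne
  unfold PerfectPlay at *
  omega

lemma PerfectPlay.of_forall {t : Bool} (h0 : s = ∅ ∨ ∃ u ∈ s, ∃ v ∈ s, G.Adj u v)
    (h : ∀ u ∈ s, ∀ v ∈ s, G.Adj u v → PerfectPlay G (!t) (s \ {u, v})) : PerfectPlay G t s := by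
  rcases gameValue_cases (G := G) (s := s) t with ⟨e, h'⟩ | ⟨u, hu, v, hv, ha, e⟩
  · rcases h0 with rfl | ⟨u, hu, v, hv, ha⟩
    · simp [PerfectPlay]
    · exact absurd ha (h' u hu v hv)
  · have := card_sdiff_edge hu hv ha.ne
    have := h u hu v hv ha
    unfold PerfectPlay at *
    omega

lemma not_perfect_of_forall {t : Bool} (h0 : s.Nonempty)
    (h : ∀ u ∈ s, ∀ v ∈ s, G.Adj u v → ¬ PerfectPlay G (!t) (s \ {u, v})) :
    ¬ PerfectPlay G t s := by
  rcases gameValue_cases (G := G) (s := s) t with ⟨e, h'⟩ | ⟨u, hu, v, hv, ha, e⟩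
  · have := h0.card_pos
    unfold PerfectPlay
    omega
  · have := card_sdiff_edge hu hv ha.ne
    have := h u hu v hv ha
    unfold PerfectPlay at *
    omega

lemma MoverLoses.of_forall {u v : V} (hu : u ∈ s) (hv : v ∈ s) (ha : G.Adj u v)
    (h : ∀ u ∈ s, ∀ v ∈ s, G.Adj u v → MoverWins G (s \ {u, v})) : MoverLoses G s :=
  ⟨not_perfect_of_forall ⟨u, hu⟩ fun u hu v hv ha => (h u hu v hv ha).2,
    PerfectPlay.of_forall (Or.inr ⟨u, hu, v, hv, ha⟩) fun u hu v hv ha => (h u hu v hv ha).1⟩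

lemma MoverLoses.moverWins {u v : V} (hu : u ∈ s) (hv : v ∈ s) (ha : G.Adj u v)
    (h : MoverLoses G (s \ {u, v})) : MoverWins G s :=
  ⟨.of_move hu hv ha h.2, not_perfect_of_move hu hv ha h.1⟩

lemma not_perfect_of_isolated (t : Bool) {x : V} (hx : x ∈ s) (h : ∀ v ∈ s, ¬ G.Adj x v) :
    ¬ PerfectPlay G t s := by
  induction hn : s.card using Nat.strong_induction_on generalizing s t with
  | _ n ih =>
    refine not_perfect_of_forall ⟨x, hx⟩ fun u hu v hv ha => ?_
    have hc := card_sdiff_edge hu hv ha.ne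
    refine ih _ (by omega) (!t) ?_ (fun w hw => h w (mem_sdiff.1 hw).1) rfl
    have h1 : x ≠ u := fun e => h v hv (e ▸ ha)
    have h2 : x ≠ v := fun e => h u hu (e ▸ ha.symm)
    simp [hx, h1, h2]

/-! ### Two disjoint cliques -/

variable {c : V → Bool}

lemma sideCard_add (c : V → Bool) (s : Finset V) :
    sideCard c true s + sideCard c false s = s.card := by
  rw [← card_filter_add_card_filter_not (s := s) (fun v => c v = true)]
  simp [sideCard]

lemma sideCard_sdiff {u v : V} (hu : u ∈ s) (hv : v ∈ s) (h : u ≠ v) (b : Bool) :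
    sideCard c b (s \ {u, v}) + ((if c u = b then 1 else 0) + (if c v = b then 1 else 0))
      = sideCard c b s := by
  have h1 : ({u, v} : Finset V) ⊆ s := by
    intro x hx
    simp only [mem_insert, mem_singleton] at hx
    rcases hx with rfl | rfl <;> assumption
  have h2 : s \ {u, v} ∪ {u, v} = s := sdiff_union_of_subset h1
  have h3 : Disjoint (s \ {u, v}) {u, v} := sdiff_disjoint
  conv_rhs => rw [← h2]
  unfold sideCard
  rw [filter_union, card_union_of_disjoint (disjoint_filter_filter h3), card_filter _ {u, v},
    sum_pair h]

lemma exists_pair_of_sideCard {b : Bool} (x y : V) (h : 4 ≤ sideCard c b s) :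
    ∃ u ∈ s, ∃ v ∈ s, u ≠ v ∧ c u = b ∧ c v = b ∧ u ≠ x ∧ u ≠ y ∧ v ≠ x ∧ v ≠ y := by
  have h1 := le_card_sdiff {x, y} (s.filter fun v => c v = b)
  have h2 := card_le_two (a := x) (b := y)
  unfold sideCard at h
  obtain ⟨u, hu, v, hv, huv⟩ := one_lt_card.1
    (show 1 < ((s.filter fun v => c v = b) \ {x, y}).card by omega)
  simp only [mem_sdiff, mem_filter, mem_insert, mem_singleton, not_or] at hu hv
  exact ⟨u, hu.1.1, v, hv.1.1, huv, hu.1.2, hv.1.2, hu.2.1, hu.2.2, hv.2.1, hv.2.2⟩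

lemma exists_of_sideCard_three {b : Bool} (x y : V) (h : 3 ≤ sideCard c b s) :
    ∃ u ∈ s, c u = b ∧ u ≠ x ∧ u ≠ y := by
  have h1 := le_card_sdiff {x, y} (s.filter fun v => c v = b)
  have h2 := card_le_two (a := x) (b := y)
  unfold sideCard at h
  obtain ⟨u, hu⟩ := card_pos.1
    (show 0 < ((s.filter fun v => c v = b) \ {x, y}).card by omega)
  simp only [mem_sdiff, mem_filter, mem_insert, mem_singleton, not_or] at hu
  exact ⟨u, hu.1.1, hu.1.2, hu.2.1, hu.2.2⟩

lemma exists_of_sideCard_two {b : Bool} (x : V) (h : 2 ≤ sideCard c b s) :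
    ∃ u ∈ s, c u = b ∧ u ≠ x := by
  obtain ⟨u, hu, hux⟩ := exists_mem_ne (s := s.filter fun v => c v = b)
    (by unfold sideCard at h; omega) x
  exact ⟨u, (mem_filter.1 hu).1, (mem_filter.1 hu).2, hux⟩

/-- On two disjoint cliques every move keeps both parities, so the matching is perfect
exactly when both cliques are even. -/
lemma perfect_twoCliques (t : Bool)
    (hG : ∀ u ∈ s, ∀ v ∈ s, G.Adj u v ↔ u ≠ v ∧ c u = c v) :
    PerfectPlay G t s ↔ Even (sideCard c true s) ∧ Even (sideCard c false s) := by
  induction hn : s.card using Nat.strong_induction_on generalizing s t with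
  | _ n ih =>
    have key : ∀ u ∈ s, ∀ v ∈ s, G.Adj u v → (PerfectPlay G (!t) (s \ {u, v}) ↔
        Even (sideCard c true s) ∧ Even (sideCard c false s)) := by
      intro u hu v hv ha
      have hc := card_sdiff_edge hu hv ha.ne
      rw [ih _ (by omega) (!t) (fun u hu v hv =>
        hG u (mem_sdiff.1 hu).1 v (mem_sdiff.1 hv).1) rfl]
      have e := ((hG u hu v hv).1 ha).2
      have h1 := sideCard_sdiff (c := c) hu hv ha.ne true
      have h2 := sideCard_sdiff (c := c) hu hv ha.ne false
      rw [← h1, ← h2, ← e]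
      cases c u <;> simp [Nat.even_add]
    constructor
    · intro hw
      by_contra hcon
      refine not_perfect_of_forall ?_ (fun u hu v hv ha => mt (key u hu v hv ha).1 hcon) hw
      rw [nonempty_iff_ne_empty]
      rintro rfl
      simp [sideCard] at hcon
    · intro he
      refine PerfectPlay.of_forall ?_ (fun u hu v hv ha => (key u hu v hv ha).2 he)
      rcases s.eq_empty_or_nonempty with h0 | ⟨x, hx⟩
      · exact Or.inl h0
      · right
        have hpos : 0 < sideCard c (c x) s := card_pos.2 ⟨x, by simp [hx]⟩
        have hev : Even (sideCard c (c x) s) := by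
          cases c x
          exacts [he.2, he.1]
        obtain ⟨u, hu, hcu, hne⟩ := exists_of_sideCard_two (c := c) (s := s) (b := c x) x (by
          obtain ⟨k, hk⟩ := hev
          omega)
        exact ⟨u, hu, x, hx, (hG u hu x hx).2 ⟨hne, hcu⟩⟩

lemma perfect_twoCliques' (t b : Bool)
    (hG : ∀ u ∈ s, ∀ v ∈ s, G.Adj u v ↔ u ≠ v ∧ c u = c v) :
    PerfectPlay G t s ↔ Even (sideCard c b s) ∧ Even (sideCard c (!b) s) := by
  rw [perfect_twoCliques (c := c) t hG]
  cases b
  · exact and_comm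
  · rfl

/-! ### One bridge -/

/-- Two cliques joined by the single edge `pq`: the mover wins, because playing `pq` flips both
parities, while playing another edge at `p` or `q` freezes them. -/
lemma moverWins_bridge {p q : V} {b : Bool} (hp : p ∈ s) (hq : q ∈ s)
    (cp : c p = b) (cq : c q = !b)
    (hG : ∀ u ∈ s, ∀ v ∈ s, G.Adj u v ↔
      u ≠ v ∧ (c u = c v ∨ (u = p ∧ v = q) ∨ (u = q ∧ v = p)))
    (hpar : Even (sideCard c b s + sideCard c (!b) s))
    (h4 : 4 ≤ sideCard c b s + sideCard c (!b) s) : MoverWins G s := by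
  have hpq : p ≠ q := by rintro rfl; simp [cp] at cq
  have apq : G.Adj p q := by rw [hG p hp q hq]; simp [hpq]
  have hP : 0 < sideCard c b s := card_pos.2 ⟨p, by simp [hp, cp]⟩
  have hQ : 0 < sideCard c (!b) s := card_pos.2 ⟨q, by simp [hq, cq]⟩
  have play : ∀ t, PerfectPlay G t (s \ {p, q}) ↔ ¬ Even (sideCard c b s) := by
    intro t
    rw [perfect_twoCliques' (c := c) t b (by intro u hu v hv; grind)]
    have h1 := sideCard_sdiff (c := c) hp hq hpq b
    have h2 := sideCard_sdiff (c := c) hp hq hpq (!b)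
    simp only [cp, cq] at h1 h2
    simp at h1 h2
    grind
  have kill : ∃ u ∈ s, ∃ v ∈ s, G.Adj u v ∧
      ∀ t, PerfectPlay G t (s \ {u, v}) ↔ Even (sideCard c b s) := by
    by_cases h2 : 2 ≤ sideCard c b s
    · obtain ⟨u, hu, cu, hup⟩ := exists_of_sideCard_two p h2
      have ha : G.Adj p u := by rw [hG p hp u hu]; exact ⟨hup.symm, Or.inl (cp.trans cu.symm)⟩
      refine ⟨p, hp, u, hu, ha, fun t => ?_⟩
      rw [perfect_twoCliques' (c := c) t b (by intro u hu v hv; grind)]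
      have h1 := sideCard_sdiff (c := c) hp hu ha.ne b
      have h2 := sideCard_sdiff (c := c) hp hu ha.ne (!b)
      simp only [cp, cu] at h1 h2
      simp at h1 h2
      grind
    · obtain ⟨u, hu, cu, huq⟩ := exists_of_sideCard_two (c := c) (s := s) (b := !b) q (by omega)
      have ha : G.Adj q u := by rw [hG q hq u hu]; exact ⟨huq.symm, Or.inl (cq.trans cu.symm)⟩
      refine ⟨q, hq, u, hu, ha, fun t => ?_⟩
      rw [perfect_twoCliques' (c := c) t b (by intro u hu v hv; grind)]
      have h1 := sideCard_sdiff (c := c) hq hu ha.ne b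
      have h2 := sideCard_sdiff (c := c) hq hu ha.ne (!b)
      simp only [cq, cu] at h1 h2
      simp at h1 h2
      grind
  obtain ⟨u, hu, v, hv, ha, hk⟩ := kill
  by_cases he : Even (sideCard c b s)
  · exact ⟨.of_move hu hv ha ((hk _).2 he),
      not_perfect_of_move hp hq apq (mt (play _).1 (not_not.2 he))⟩
  · exact ⟨.of_move hp hq apq ((play _).2 he),
      not_perfect_of_move hu hv ha (mt (hk _).1 he)⟩

/-- As `moverWins_bridge`, with the edge between `p` and one vertex `p'` of its clique
removed. Both decisive moves delete `p` and so restore two disjoint cliques. -/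
lemma moverWins_bridge_defect {p p' q : V} {b : Bool} (hp : p ∈ s) (hq : q ∈ s)
    (cp : c p = b) (cq : c q = !b)
    (hG : ∀ u ∈ s, ∀ v ∈ s, G.Adj u v ↔
      u ≠ v ∧ ((c u = c v ∧ ¬ (u = p ∧ v = p') ∧ ¬ (u = p' ∧ v = p)) ∨
        (u = p ∧ v = q) ∨ (u = q ∧ v = p)))
    (hpar : Even (sideCard c b s + sideCard c (!b) s))
    (h3 : 3 ≤ sideCard c b s) : MoverWins G s := by
  have hpq : p ≠ q := by rintro rfl; simp [cp] at cq
  have apq : G.Adj p q := by rw [hG p hp q hq]; simp [hpq]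
  have hQ : 0 < sideCard c (!b) s := card_pos.2 ⟨q, by simp [hq, cq]⟩
  have play : ∀ t, PerfectPlay G t (s \ {p, q}) ↔ ¬ Even (sideCard c b s) := by
    intro t
    rw [perfect_twoCliques' (c := c) t b (by intro u hu v hv; grind)]
    have h1 := sideCard_sdiff (c := c) hp hq hpq b
    have h2 := sideCard_sdiff (c := c) hp hq hpq (!b)
    simp only [cp, cq] at h1 h2
    simp at h1 h2
    grind
  obtain ⟨u, hu, cu, hup, hup'⟩ := exists_of_sideCard_three p p' h3
  have ha : G.Adj p u := by
    rw [hG p hp u hu]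
    grind
  have hk : ∀ t, PerfectPlay G t (s \ {p, u}) ↔ Even (sideCard c b s) := by
    intro t
    rw [perfect_twoCliques' (c := c) t b (by intro u hu v hv; grind)]
    have h1 := sideCard_sdiff (c := c) hp hu ha.ne b
    have h2 := sideCard_sdiff (c := c) hp hu ha.ne (!b)
    simp only [cp, cu] at h1 h2
    simp at h1 h2
    grind
  by_cases he : Even (sideCard c b s)
  · exact ⟨.of_move hp hu ha ((hk _).2 he),
      not_perfect_of_move hp hq apq (mt (play _).1 (not_not.2 he))⟩
  · exact ⟨.of_move hp hq apq ((play _).2 he),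
      not_perfect_of_move hp hu ha (mt (hk _).1 he)⟩

/-! ### Two bridges -/

/-- The position `s` consists of two cliques (the sides of `c`) from which the edges `p₁p₂` and
`q₁q₂` are removed, together with the two cross edges `p₁q₁` and `p₂q₂`. -/
structure DoubleBridge (G : SimpleGraph V) (c : V → Bool) (p₁ p₂ q₁ q₂ : V) (b : Bool)
    (s : Finset V) : Prop where
  hp₁ : p₁ ∈ s
  hp₂ : p₂ ∈ s
  hq₁ : q₁ ∈ s
  hq₂ : q₂ ∈ s
  hp : p₁ ≠ p₂
  hq : q₁ ≠ q₂
  cp₁ : c p₁ = b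
  cp₂ : c p₂ = b
  cq₁ : c q₁ = !b
  cq₂ : c q₂ = !b
  adj : ∀ u ∈ s, ∀ v ∈ s, G.Adj u v ↔ u ≠ v ∧
    ((c u = c v ∧ ¬ (u = p₁ ∧ v = p₂) ∧ ¬ (u = p₂ ∧ v = p₁) ∧
        ¬ (u = q₁ ∧ v = q₂) ∧ ¬ (u = q₂ ∧ v = q₁)) ∨
      (u = p₁ ∧ v = q₁) ∨ (u = q₁ ∧ v = p₁) ∨ (u = p₂ ∧ v = q₂) ∨ (u = q₂ ∧ v = p₂))

namespace DoubleBridge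

variable {p₁ p₂ q₁ q₂ : V} {b : Bool}

lemma swapIndex (h : DoubleBridge G c p₁ p₂ q₁ q₂ b s) : DoubleBridge G c p₂ p₁ q₂ q₁ b s where
  hp₁ := h.hp₂
  hp₂ := h.hp₁
  hq₁ := h.hq₂
  hq₂ := h.hq₁
  hp := h.hp.symm
  hq := h.hq.symm
  cp₁ := h.cp₂
  cp₂ := h.cp₁
  cq₁ := h.cq₂
  cq₂ := h.cq₁
  adj u hu v hv := by
    rw [h.adj u hu v hv]
    clear h
    grind

lemma swapSide (h : DoubleBridge G c p₁ p₂ q₁ q₂ b s) :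
    DoubleBridge G c q₁ q₂ p₁ p₂ (!b) s where
  hp₁ := h.hq₁
  hp₂ := h.hq₂
  hq₁ := h.hp₁
  hq₂ := h.hp₂
  hp := h.hq
  hq := h.hp
  cp₁ := h.cq₁
  cp₂ := h.cq₂
  cq₁ := by simpa using h.cp₁
  cq₂ := by simpa using h.cp₂
  adj u hu v hv := by
    rw [h.adj u hu v hv]
    clear h
    grind

lemma sdiff (h : DoubleBridge G c p₁ p₂ q₁ q₂ b s) {u v : V}
    (h₁ : p₁ ≠ u ∧ p₁ ≠ v) (h₂ : p₂ ≠ u ∧ p₂ ≠ v) (h₃ : q₁ ≠ u ∧ q₁ ≠ v)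
    (h₄ : q₂ ≠ u ∧ q₂ ≠ v) : DoubleBridge G c p₁ p₂ q₁ q₂ b (s \ {u, v}) where
  hp₁ := by simp [h.hp₁, h₁]
  hp₂ := by simp [h.hp₂, h₂]
  hq₁ := by simp [h.hq₁, h₃]
  hq₂ := by simp [h.hq₂, h₄]
  hp := h.hp
  hq := h.hq
  cp₁ := h.cp₁
  cp₂ := h.cp₂
  cq₁ := h.cq₁
  cq₂ := h.cq₂
  adj u hu v hv := h.adj u (mem_sdiff.1 hu).1 v (mem_sdiff.1 hv).1

lemma two_le (h : DoubleBridge G c p₁ p₂ q₁ q₂ b s) : 2 ≤ sideCard c b s := by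
  rw [← card_pair h.hp]
  refine card_le_card fun x hx => ?_
  simp only [mem_insert, mem_singleton] at hx
  rcases hx with rfl | rfl
  · simp [h.hp₁, h.cp₁]
  · simp [h.hp₂, h.cp₂]

/-- Playing a cross edge leaves a single bridge. -/
lemma moverWins_cross (h : DoubleBridge G c p₁ p₂ q₁ q₂ b s)
    (e : sideCard c b s = sideCard c (!b) s) (h3 : 3 ≤ sideCard c b s) :
    MoverWins G (s \ {p₁, q₁}) := by
  obtain ⟨hp₁, hp₂, hq₁, hq₂, hp, hq, cp₁, cp₂, cq₁, cq₂, adj⟩ := h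
  have hpq : p₁ ≠ q₁ := by rintro rfl; simp [cp₁] at cq₁
  have h1 := sideCard_sdiff (c := c) hp₁ hq₁ hpq b
  have h2 := sideCard_sdiff (c := c) hp₁ hq₁ hpq (!b)
  simp only [cp₁, cq₁] at h1 h2
  simp at h1 h2
  refine moverWins_bridge (c := c) (b := b) (p := p₂) (q := q₂) ?_ ?_ cp₂ cq₂ ?_ ?_ ?_
  · grind
  · grind
  · intro u hu v hv
    rw [adj u (mem_sdiff.1 hu).1 v (mem_sdiff.1 hv).1]
    grind
  · grind
  · omega

/-- Playing an edge inside a side at `p₁` leaves a single bridge with a defect at `q₂`. -/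
lemma moverWins_end (h : DoubleBridge G c p₁ p₂ q₁ q₂ b s)
    (e : sideCard c b s = sideCard c (!b) s) (h3 : 3 ≤ sideCard c b s)
    {v : V} (hv : v ∈ s) (cv : c v = b) (hv₁ : v ≠ p₁) (hv₂ : v ≠ p₂) :
    MoverWins G (s \ {p₁, v}) := by
  obtain ⟨hp₁, hp₂, hq₁, hq₂, hp, hq, cp₁, cp₂, cq₁, cq₂, adj⟩ := h
  have h1 := sideCard_sdiff (c := c) hp₁ hv hv₁.symm b
  have h2 := sideCard_sdiff (c := c) hp₁ hv hv₁.symm (!b)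
  simp only [cp₁, cv] at h1 h2
  simp at h1 h2
  refine moverWins_bridge_defect (c := c) (b := !b) (p := q₂) (p' := q₁) (q := p₂)
    ?_ ?_ cq₂ (by simpa using cp₂) ?_ ?_ ?_
  · grind
  · grind
  · intro u hu v hv
    rw [adj u (mem_sdiff.1 hu).1 v (mem_sdiff.1 hv).1]
    grind
  · rw [Bool.not_not]
    grind
  · omega

/-- If the first side has two vertices and the second one four, the mover wins: Max
plays the edge avoiding the bridges and leaves two disjoint edges, Min isolates `p₁`. -/
lemma moverWins_two_four (h : DoubleBridge G c p₁ p₂ q₁ q₂ b s)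
    (h2 : sideCard c b s = 2) (h4 : sideCard c (!b) s = 4) : MoverWins G s := by
  have h2b := h2
  obtain ⟨u, hu, v, hv, huv, cu, cv, hu₁, hu₂, hv₁, hv₂⟩ := exists_pair_of_sideCard q₁ q₂ h4.ge
  have hpair : s.filter (fun v => c v = b) = {p₁, p₂} := by
    refine (eq_of_subset_of_card_le (fun x hx => ?_) ?_).symm
    · simp only [mem_insert, mem_singleton] at hx
      rcases hx with rfl | rfl
      · simp [h.hp₁, h.cp₁]
      · simp [h.hp₂, h.cp₂]
    · rw [card_pair h.hp]
      exact h2.le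
  have hside : ∀ x ∈ s, c x = b → x = p₁ ∨ x = p₂ := by
    intro x hx cx
    have : x ∈ s.filter (fun v => c v = b) := by simp [hx, cx]
    simpa [hpair] using this
  obtain ⟨hp₁, hp₂, hq₁, hq₂, hp, hq, cp₁, cp₂, cq₁, cq₂, adj⟩ := h
  have auv : G.Adj u v := by rw [adj u hu v hv]; grind
  have aqu : G.Adj q₁ u := by rw [adj _ hq₁ u hu]; grind
  have cross : ∀ x y, c x = b → c y = !b → x ≠ y := by
    rintro x y hx hy rfl
    simp [hx] at hy
  have n₁ := cross p₁ q₁ cp₁ cq₁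
  have n₂ := cross p₁ q₂ cp₁ cq₂
  have n₃ := cross p₂ q₁ cp₂ cq₁
  have n₄ := cross p₂ q₂ cp₂ cq₂
  have n₅ := cross p₁ u cp₁ cu
  have n₆ := cross p₁ v cp₁ cv
  have n₇ := cross p₂ u cp₂ cu
  have n₈ := cross p₂ v cp₂ cv
  constructor
  · refine .of_move hu hv auv ?_
    have hs : s \ {u, v} = {p₁, q₁, p₂, q₂} := by
      clear adj
      refine (eq_of_subset_of_card_le (fun x hx => ?_) ?_).symm
      · simp only [mem_insert, mem_singleton] at hx
        rcases hx with rfl | rfl | rfl | rfl <;> simp [*, Ne.symm hu₁, Ne.symm hu₂,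
          Ne.symm hv₁, Ne.symm hv₂]
      · have h5 := card_sdiff_edge hu hv huv
        have h6 := sideCard_add c s
        have h7 : ({p₁, q₁, p₂, q₂} : Finset V).card = 4 := by
          simp [*, Ne.symm n₃]
        cases b <;> simp at h2 h4 <;> omega
    rw [perfect_twoCliques (c := fun x => decide (x = p₁ ∨ x = q₁))]
    · have e1 : sideCard (fun x => decide (x = p₁ ∨ x = q₁)) true (s \ {u, v}) = 2 := by
        rw [hs, ← card_pair n₁]
        unfold sideCard
        congr 1
        clear adj hside hpair
        ext x
        simp only [mem_filter, mem_insert, mem_singleton, decide_eq_true_eq]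
        tauto
      have e2 : sideCard (fun x => decide (x = p₁ ∨ x = q₁)) false (s \ {u, v}) = 2 := by
        rw [hs, ← card_pair n₄]
        unfold sideCard
        congr 1
        clear adj hside hpair
        ext x
        simp only [mem_filter, mem_insert, mem_singleton, decide_eq_false_iff_not]
        grind
      rw [e1, e2]
      decide
    · intro x hx y hy
      rw [adj x (mem_sdiff.1 hx).1 y (mem_sdiff.1 hy).1]
      rw [hs] at hx hy
      clear adj hside hpair hs
      simp only [mem_insert, mem_singleton] at hx hy
      rcases hx with rfl | rfl | rfl | rfl <;> rcases hy with rfl | rfl | rfl | rfl <;>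
        simp [*, Ne.symm n₁, Ne.symm n₂, Ne.symm n₃, Ne.symm n₄, Ne.symm hp, Ne.symm hq]
  · refine not_perfect_of_move hq₁ hu aqu
      (not_perfect_of_isolated true (x := p₁) (by simp [hp₁, n₁, n₅]) ?_)
    intro x hx
    rw [adj p₁ hp₁ x (mem_sdiff.1 hx).1]
    have hx' := hside x (mem_sdiff.1 hx).1
    clear adj hside hpair
    simp only [mem_sdiff, mem_insert, mem_singleton] at hx
    grind

/-- With equal sides the mover loses, since every move lets the opponent decide; with the
second side larger by two the mover equalises them, or decides at once if the first side is
`{p₁, p₂}`. -/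
lemma outcome (h : DoubleBridge G c p₁ p₂ q₁ q₂ b s) :
    (sideCard c b s = sideCard c (!b) s → 3 ≤ sideCard c b s → MoverLoses G s) ∧
      (sideCard c b s + 2 = sideCard c (!b) s → MoverWins G s) := by
  induction hn : s.card using Nat.strong_induction_on generalizing s b p₁ p₂ q₁ q₂ with
  | _ n ih =>
    constructor
    · intro e h3
      have hpq : p₁ ≠ q₁ := by
        rintro rfl
        simpa [h.cp₁] using h.cq₁
      have apq : G.Adj p₁ q₁ := by
        rw [h.adj _ h.hp₁ _ h.hq₁]
        simp [hpq]
      refine .of_forall h.hp₁ h.hq₁ apq ?_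
      -- By symmetry it suffices to treat edges with an end on side `b`.
      have main : ∀ {b : Bool} {p₁ p₂ q₁ q₂ : V}, DoubleBridge G c p₁ p₂ q₁ q₂ b s →
          sideCard c b s = sideCard c (!b) s → 3 ≤ sideCard c b s →
          ∀ u ∈ s, ∀ v ∈ s, G.Adj u v → c u = b → MoverWins G (s \ {u, v}) := by
        clear h e h3 hpq apq
        intro b p₁ p₂ q₁ q₂ h e h3 u hu v hv ha cu
        by_cases cv : c v = b
        · by_cases hu₁ : u = p₁
          · subst hu₁
            refine h.moverWins_end e h3 hv cv ha.ne' ?_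
            rintro rfl
            rw [h.adj _ hu _ hv] at ha
            have := h.cq₁
            have := h.cq₂
            grind
          by_cases hu₂ : u = p₂
          · subst hu₂
            refine h.swapIndex.moverWins_end e h3 hv cv ha.ne' ?_
            rintro rfl
            rw [h.adj _ hu _ hv] at ha
            have := h.cq₁
            have := h.cq₂
            grind
          by_cases hv₁ : v = p₁
          · subst hv₁
            rw [pair_comm]
            exact h.moverWins_end e h3 hu cu hu₁ hu₂
          by_cases hv₂ : v = p₂
          · subst hv₂
            rw [pair_comm]
            exact h.swapIndex.moverWins_end e h3 hu cu hu₂ hu₁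
          have hc := card_sdiff_edge hu hv ha.ne
          have c1 := sideCard_sdiff (c := c) hu hv ha.ne b
          have c2 := sideCard_sdiff (c := c) hu hv ha.ne (!b)
          simp only [cu, cv] at c1 c2
          simp at c1 c2
          have k₁ : q₁ ≠ u := by rintro rfl; simpa [cu] using h.cq₁
          have k₂ : q₂ ≠ u := by rintro rfl; simpa [cu] using h.cq₂
          have k₃ : q₁ ≠ v := by rintro rfl; simpa [cv] using h.cq₁
          have k₄ : q₂ ≠ v := by rintro rfl; simpa [cv] using h.cq₂
          exact (ih _ (by omega) (h.sdiff ⟨Ne.symm hu₁, Ne.symm hv₁⟩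
            ⟨Ne.symm hu₂, Ne.symm hv₂⟩ ⟨k₁, k₃⟩ ⟨k₂, k₄⟩) rfl).2 (by omega)
        · have hcross : (u = p₁ ∧ v = q₁) ∨ (u = p₂ ∧ v = q₂) := by
            rw [h.adj _ hu _ hv] at ha
            have := h.cq₁
            have := h.cq₂
            have := h.cp₁
            have := h.cp₂
            clear h ih
            grind
          rcases hcross with ⟨rfl, rfl⟩ | ⟨rfl, rfl⟩
          · exact h.moverWins_cross e h3
          · exact h.swapIndex.moverWins_cross e h3
      intro u hu v hv ha
      by_cases cu : c u = b
      · exact main h e h3 u hu v hv ha cu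
      · exact main h.swapSide (by rw [Bool.not_not]; exact e.symm) (e ▸ h3) u hu v hv ha
          (by cases b <;> simpa using cu)
    · intro e
      by_cases h2 : sideCard c b s = 2
      · exact h.moverWins_two_four h2 (by omega)
      have hge := h.two_le
      obtain ⟨u, hu, v, hv, huv, cu, cv, hu₁, hu₂, hv₁, hv₂⟩ :=
        exists_pair_of_sideCard (c := c) (s := s) (b := !b) q₁ q₂ (by omega)
      have auv : G.Adj u v := by
        rw [h.adj u hu v hv]
        refine ⟨huv, Or.inl ⟨cu.trans cv.symm, ?_, ?_, ?_, ?_⟩⟩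
        · rintro ⟨rfl, -⟩
          simpa [h.cp₁] using cu
        · rintro ⟨rfl, -⟩
          simpa [h.cp₂] using cu
        · exact fun hh => hu₁ hh.1
        · exact fun hh => hu₂ hh.1
      have hc := card_sdiff_edge hu hv huv
      have c1 := sideCard_sdiff (c := c) hu hv huv b
      have c2 := sideCard_sdiff (c := c) hu hv huv (!b)
      simp only [cu, cv] at c1 c2
      simp at c1 c2
      have k₁ : p₁ ≠ u := by rintro rfl; simpa [h.cp₁] using cu
      have k₂ : p₂ ≠ u := by rintro rfl; simpa [h.cp₂] using cu
      have k₃ : p₁ ≠ v := by rintro rfl; simpa [h.cp₁] using cv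
      have k₄ : p₂ ≠ v := by rintro rfl; simpa [h.cp₂] using cv
      exact MoverLoses.moverWins hu hv auv ((ih _ (by omega) (h.sdiff ⟨k₁, k₃⟩ ⟨k₂, k₄⟩
        ⟨hu₁.symm, hv₁.symm⟩ ⟨hu₂.symm, hv₂.symm⟩) rfl).1 (by omega) (by omega))

end DoubleBridge

/-! ### Values of the game -/

/-- If each side of `c` becomes a clique after deleting one vertex `p b`, and the two deleted
vertices are adjacent, then the independence number is at most three. -/
lemma card_le_three_of_independent (p : Bool → V) (hp : G.Adj (p true) (p false))
    (hs : ∀ u v, u ≠ v → c u = c v → u ≠ p (c u) → v ≠ p (c u) → G.Adj u v)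
    (I : Finset V) (hI : ∀ u ∈ I, ∀ v ∈ I, ¬ G.Adj u v) : I.card ≤ 3 := by
  have side : ∀ b, sideCard c b I ≤ 1 + if p b ∈ I then 1 else 0 := by
    intro b
    have h1 : ((I.filter fun v => c v = b).erase (p b)).card ≤ 1 := by
      rw [card_le_one]
      intro x hx y hy
      simp only [mem_erase, mem_filter] at hx hy
      obtain ⟨hx₁, hx₂, rfl⟩ := hx
      by_contra hxy
      exact hI x hx₂ y hy.2.1 (hs x y hxy hy.2.2.symm hx₁ hy.1)
    unfold sideCard
    split_ifs with h
    · have := pred_card_le_card_erase (s := I.filter fun v => c v = b) (a := p b)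
      omega
    · rwa [erase_eq_of_notMem (by simp [h])] at h1
  have h1 := side true
  have h2 := side false
  have h3 : ¬ (p true ∈ I ∧ p false ∈ I) := fun h => hI _ h.1 _ h.2 hp
  have := sideCard_add c I
  split_ifs at h1 h2 <;> first | omega | exact absurd ⟨‹_›, ‹_›⟩ h3

lemma PerfectPlay.gameValue_eq {t : Bool} {k : ℕ} (h : PerfectPlay G t s) (hc : s.card = 2 * k) :
    gameValue G t s = k := by
  have := two_mul_gameValue_le (G := G) (s := s) t
  unfold PerfectPlay at h
  omega

/-- An imperfect final matching on an even number of vertices misses exactly two of them if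
the independence number is at most three. -/
lemma gameValue_eq_of_not_perfect {t : Bool} {k : ℕ} (h : ¬ PerfectPlay G t s)
    (hc : s.card = 2 * (k + 1))
    (hs : ∀ I ⊆ s, (∀ u ∈ I, ∀ v ∈ I, ¬ G.Adj u v) → I.card ≤ 3) : gameValue G t s = k := by
  have := card_le_two_mul_gameValue_add t hs
  unfold PerfectPlay at h
  omega

end Game

/-! ### The three families of graphs -/

lemma exists_equal (r : ℕ) (hr : 1 ≤ r) :
    ∃ (n : ℕ) (G : SimpleGraph (Fin n)), G.Connected ∧ gameMax G = r ∧ gameMin G = r := by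
  have : NeZero (2 * r) := ⟨by omega⟩
  refine ⟨2 * r, ⊤, SimpleGraph.connected_top, ?_⟩
  letI : DecidableRel (⊤ : SimpleGraph (Fin (2 * r))).Adj := Classical.decRel _
  have h : ∀ t, PerfectPlay (⊤ : SimpleGraph (Fin (2 * r))) t univ := by
    intro t
    rw [perfect_twoCliques (c := fun _ => true) t (by simp)]
    simp [sideCard]
  exact ⟨(h true).gameValue_eq (by simp), (h false).gameValue_eq (by simp)⟩

/-- The witness is a clique with a pendant edge: the cliques `{0}` and `{1, …}`, joined by the
edge `01`. -/
lemma exists_max_larger (s : ℕ) (hs : 1 ≤ s) :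
    ∃ (n : ℕ) (G : SimpleGraph (Fin n)), G.Connected ∧ gameMax G = s + 1 ∧ gameMin G = s := by
  let c : Fin (2 * (s + 1)) → Bool := fun i => decide (i.val = 0)
  let p : Fin (2 * (s + 1)) := ⟨0, by omega⟩
  let q : Fin (2 * (s + 1)) := ⟨1, by omega⟩
  have cp : c p = true := rfl
  have cq : c q = !true := rfl
  have hpq : p ≠ q := by simp [p, q]
  let G : SimpleGraph (Fin (2 * (s + 1))) :=
    SimpleGraph.fromRel fun u v => c u = c v ∨ (u = p ∧ v = q)
  have adj : ∀ u v, G.Adj u v ↔ u ≠ v ∧ (c u = c v ∨ (u = p ∧ v = q) ∨ (u = q ∧ v = p)) := by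
    intro u v
    rw [SimpleGraph.fromRel_adj]
    clear_value c p q
    clear G
    grind
  clear_value G
  have side : ∀ u, c u = true → u = p := by
    intro u hu
    ext
    simpa [c, p] using hu
  letI : DecidableRel G.Adj := Classical.decRel _
  have hcard : (univ : Finset (Fin (2 * (s + 1)))).card = 2 * (s + 1) := by simp
  have hsum := sideCard_add c univ
  have hw : MoverWins G univ :=
    moverWins_bridge (mem_univ p) (mem_univ q) cp cq (fun u _ v _ => adj u v)
      (by simp only [Bool.not_true]; rw [hsum, hcard]; exact even_two_mul _)
      (by simp only [Bool.not_true]; omega)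
  have hI : ∀ I ⊆ univ, (∀ u ∈ I, ∀ v ∈ I, ¬ G.Adj u v) → I.card ≤ 3 := fun I _ =>
    card_le_three_of_independent (c := c) (fun b => if b then p else q)
      (by rw [adj]; simp [hpq]) (fun u v huv hc _ _ => (adj u v).2 ⟨huv, Or.inl hc⟩) I
  refine ⟨_, G, ?_, hw.1.gameValue_eq hcard, gameValue_eq_of_not_perfect hw.2 hcard hI⟩
  refine (SimpleGraph.connected_iff_exists_forall_reachable G).2 ⟨q, fun w => ?_⟩
  by_cases hw : w = q
  · rw [hw]
  · refine ((adj q w).2 ⟨Ne.symm hw, ?_⟩).reachable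
    cases hcw : c w
    · exact Or.inl cq
    · exact Or.inr (Or.inr ⟨rfl, side w hcw⟩)

/-- The witness is a double bridge with two sides of `r + 1` vertices each, that is a hexagon
in which two opposite vertices are blown up to cliques of `r - 1` vertices. -/
lemma exists_min_larger (r : ℕ) (hr : 2 ≤ r) :
    ∃ (n : ℕ) (G : SimpleGraph (Fin n)), G.Connected ∧ gameMax G = r ∧ gameMin G = r + 1 := by
  let c : Fin (2 * (r + 1)) → Bool := fun i => decide (i.val < r + 1)
  let p₁ : Fin (2 * (r + 1)) := ⟨0, by omega⟩
  let p₂ : Fin (2 * (r + 1)) := ⟨1, by omega⟩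
  let p₃ : Fin (2 * (r + 1)) := ⟨2, by omega⟩
  let q₁ : Fin (2 * (r + 1)) := ⟨r + 1, by omega⟩
  let q₂ : Fin (2 * (r + 1)) := ⟨r + 2, by omega⟩
  let q₃ : Fin (2 * (r + 1)) := ⟨r + 3, by omega⟩
  have hp : p₁ ≠ p₂ := by simp [p₁, p₂]
  have hq : q₁ ≠ q₂ := by simp [q₁, q₂]
  have hp₁₃ : p₁ ≠ p₃ := by simp [p₁, p₃]
  have hp₂₃ : p₂ ≠ p₃ := by simp [p₂, p₃]
  have hq₁₃ : q₁ ≠ q₃ := by simp [q₁, q₃]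
  have hq₂₃ : q₂ ≠ q₃ := by simp [q₂, q₃]
  have cp₁ : c p₁ = true := by simp [c, p₁]
  have cp₂ : c p₂ = true := decide_eq_true (show 1 < r + 1 by omega)
  have cp₃ : c p₃ = true := decide_eq_true (show 2 < r + 1 by omega)
  have cq₁ : c q₁ = false := by simp [c, q₁]
  have cq₂ : c q₂ = false := by simp [c, q₂]
  have cq₃ : c q₃ = false := by simp [c, q₃]
  have hcard : (univ : Finset (Fin (2 * (r + 1)))).card = 2 * (r + 1) := by simp
  have hsum := sideCard_add c univ
  have htrue : sideCard c true univ = r + 1 := by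
    simp only [sideCard, c, decide_eq_true_eq]
    rw [Fin.card_filter_val_lt]
    omega
  clear_value c p₁ p₂ p₃ q₁ q₂ q₃
  let G : SimpleGraph (Fin (2 * (r + 1))) :=
    SimpleGraph.fromRel fun u v =>
      (c u = c v ∧ ¬ (u = p₁ ∧ v = p₂) ∧ ¬ (u = p₂ ∧ v = p₁) ∧
        ¬ (u = q₁ ∧ v = q₂) ∧ ¬ (u = q₂ ∧ v = q₁)) ∨ (u = p₁ ∧ v = q₁) ∨ (u = p₂ ∧ v = q₂)
  have adj : ∀ u v, G.Adj u v ↔ u ≠ v ∧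
      ((c u = c v ∧ ¬ (u = p₁ ∧ v = p₂) ∧ ¬ (u = p₂ ∧ v = p₁) ∧
        ¬ (u = q₁ ∧ v = q₂) ∧ ¬ (u = q₂ ∧ v = q₁)) ∨
      (u = p₁ ∧ v = q₁) ∨ (u = q₁ ∧ v = p₁) ∨ (u = p₂ ∧ v = q₂) ∨ (u = q₂ ∧ v = p₂)) := by
    intro u v
    rw [SimpleGraph.fromRel_adj]
    constructor
    · rintro ⟨h, (h' | h' | h') | ⟨e, h₁, h₂, h₃, h₄⟩ | h' | h'⟩
      · exact ⟨h, Or.inl h'⟩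
      · exact ⟨h, Or.inr (Or.inl h')⟩
      · exact ⟨h, Or.inr (Or.inr (Or.inr (Or.inl h')))⟩
      · exact ⟨h, Or.inl ⟨e.symm, fun k => h₂ k.symm, fun k => h₁ k.symm,
          fun k => h₄ k.symm, fun k => h₃ k.symm⟩⟩
      · exact ⟨h, Or.inr (Or.inr (Or.inl h'.symm))⟩
      · exact ⟨h, Or.inr (Or.inr (Or.inr (Or.inr h'.symm)))⟩
    · rintro ⟨h, h' | h' | h' | h' | h'⟩
      · exact ⟨h, Or.inl (Or.inl h')⟩
      · exact ⟨h, Or.inl (Or.inr (Or.inl h'))⟩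
      · exact ⟨h, Or.inr (Or.inr (Or.inl h'.symm))⟩
      · exact ⟨h, Or.inl (Or.inr (Or.inr h'))⟩
      · exact ⟨h, Or.inr (Or.inr (Or.inr h'.symm))⟩
  clear_value G
  letI : DecidableRel G.Adj := Classical.decRel _
  have hD : DoubleBridge G c p₁ p₂ q₁ q₂ true univ :=
    ⟨mem_univ _, mem_univ _, mem_univ _, mem_univ _, hp, hq, cp₁, cp₂, cq₁, cq₂,
      fun u _ v _ => adj u v⟩
  have hl : MoverLoses G univ :=
    hD.outcome.1 (by simp only [Bool.not_true]; omega) (by omega)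
  have apq : G.Adj p₁ q₁ := by
    rw [adj]
    refine ⟨fun h => ?_, Or.inr (Or.inl ⟨rfl, rfl⟩)⟩
    simp [h, cq₁] at cp₁
  have hI : ∀ I ⊆ univ, (∀ u ∈ I, ∀ v ∈ I, ¬ G.Adj u v) → I.card ≤ 3 := by
    refine fun I _ => card_le_three_of_independent (c := c) (fun b => if b then p₁ else q₁)
      (by simpa using apq) (fun u v huv hc hu hv => ?_) I
    rw [adj]
    clear adj hD hl
    cases hcu : c u <;> simp only [hcu] at hu hv <;> grind
  refine ⟨_, G, ?_, gameValue_eq_of_not_perfect hl.1 hcard hI, hl.2.gameValue_eq hcard⟩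
  -- The vertices `p₃` and `q₃` are adjacent to everything else on their sides.
  have left : ∀ w, c w = true → G.Reachable p₃ w := by
    intro w hw
    by_cases h : w = p₃
    · rw [h]
    · refine ((adj p₃ w).2 ⟨Ne.symm h, Or.inl ⟨cp₃.trans hw.symm, ?_⟩⟩).reachable
      clear adj hD hl hI
      grind
  have right : ∀ w, c w = false → G.Reachable q₃ w := by
    intro w hw
    by_cases h : w = q₃
    · rw [h]
    · refine ((adj q₃ w).2 ⟨Ne.symm h, Or.inl ⟨cq₃.trans hw.symm, ?_⟩⟩).reachable
      clear adj hD hl hI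
      grind
  refine (SimpleGraph.connected_iff_exists_forall_reachable G).2 ⟨p₃, fun w => ?_⟩
  cases hw : c w
  · exact (left p₁ cp₁).trans (apq.reachable.trans ((right q₁ cq₁).symm.trans (right w hw)))
  · exact left w hw

/-- every pair `(r, s)` of positive integers with `|r - s| ≤ 1`,
except `(1, 2)`, is realizable as `(Max G, Min G)` for a connected graph `G`. -/
theorem stmt0 (r s : ℕ) (hr : 1 ≤ r) (hs : 1 ≤ s)
    (hdiff : |(r : ℤ) - (s : ℤ)| ≤ 1) (hne : (r, s) ≠ (1, 2)) :
    ∃ (n : ℕ) (G : SimpleGraph (Fin n)),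
      G.Connected ∧ gameMax G = r ∧ gameMin G = s := by
  rw [abs_le] at hdiff
  have h : s = r ∨ r = s + 1 ∨ s = r + 1 := by omega
  rcases h with rfl | rfl | rfl
  · exact exists_equal _ hr
  · exact exists_max_larger _ hs
  · refine exists_min_larger _ ?_
    by_contra h
    exact hne (by simp; omega)
end

section
/- Let G be a finite simple split graph whose vertex set is partitioned as V(G) = S ∪ T, where S is an independent set and T is a clique. Then Max(G) ≤ ⌈2|T|/3⌉. -/
/-!
Every edge of a split graph uses at least one vertex of the clique `T`, so each move of Max
removes at least one clique vertex. Min answers by playing an edge inside `T` as long as two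
clique vertices remain, so each round of two moves costs at least three clique vertices.

With `t` clique vertices left, this gives by simultaneous induction the bounds `⌈2t/3⌉` when Max
is to move and `⌊(2t+1)/3⌋` when Min is to move (`gameValue_le_of_split`).
-/

open Finset

variable {V : Type*} [DecidableEq V]

/-- A move removes from `T` as many remaining vertices as it has endpoints in `T`. -/
lemma card_inter_sdiff_pair {V : Type*} [DecidableEq V] (s T : Finset V) {u v : V}
    (hu : u ∈ s) (hv : v ∈ s) (huv : u ≠ v) :
    ((s \ {u, v}) ∩ T).card + (if u ∈ T then 1 else 0) + (if v ∈ T then 1 else 0)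
      = (s ∩ T).card := by
  have h : (s \ {u, v}) ∩ T = (s ∩ T) \ (({u, v} : Finset V) ∩ T) := by
    ext x
    simp only [mem_inter, mem_sdiff]
    tauto
  have hsub : ({u, v} : Finset V) ∩ T ⊆ s ∩ T := by
    intro x hx
    simp only [mem_inter, mem_insert, mem_singleton] at hx ⊢
    rcases hx with ⟨rfl | rfl, hxT⟩
    · exact ⟨hu, hxT⟩
    · exact ⟨hv, hxT⟩
  have hc := card_sdiff_add_card_eq_card hsub
  have hp : (({u, v} : Finset V) ∩ T).card
      = (if u ∈ T then 1 else 0) + (if v ∈ T then 1 else 0) := by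
    by_cases h1 : u ∈ T <;> by_cases h2 : v ∈ T <;>
      simp [insert_inter_of_mem, insert_inter_of_notMem, singleton_inter_of_mem,
        singleton_inter_of_notMem, h1, h2, huv]
  rw [h]
  omega

/-- The two bounds proved together, for the game on any set `s` of remaining vertices, in terms
of the number of remaining vertices in `T`. Splitness enters as: every edge meets `T`, and `T`
is a clique. -/
lemma gameValue_le_of_split {V : Type*} [DecidableEq V] (G : SimpleGraph V)
    [DecidableRel G.Adj] (T : Finset V)
    (hS : ∀ u v, G.Adj u v → u ∈ T ∨ v ∈ T)
    (hT : ∀ u ∈ T, ∀ v ∈ T, u ≠ v → G.Adj u v) (n : ℕ) :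
    ∀ s : Finset V, s.card = n →
      gameValue G true s ≤ (2 * (s ∩ T).card + 2) / 3 ∧
      gameValue G false s ≤ (2 * (s ∩ T).card + 1) / 3 := by
  induction n using Nat.strong_induction_on with
  | _ n ih =>
    intro s hs
    by_cases h : (matchPlays G s).Nonempty
    swap
    · rw [gameValue, gameValue]
      simp [h]
    have key : ∀ p ∈ matchPlays G s,
        ((s \ {p.1, p.2}) ∩ T).card + (if p.1 ∈ T then 1 else 0) + (if p.2 ∈ T then 1 else 0)
          = (s ∩ T).card ∧ (p.1 ∈ T ∨ p.2 ∈ T) := by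
      intro p hp
      simp only [matchPlays, mem_filter, mem_product] at hp
      exact ⟨card_inter_sdiff_pair s T hp.1.1 hp.1.2 hp.2.ne, hS _ _ hp.2⟩
    have drop : ∀ p ∈ matchPlays G s, ((s \ {p.1, p.2}) ∩ T).card + 1 ≤ (s ∩ T).card := by
      intro p hp
      obtain ⟨h1, h2⟩ := key p hp
      rcases h2 with h2 | h2 <;> rw [if_pos h2] at h1 <;> omega
    have hrec := fun p (hp : p ∈ matchPlays G s) =>
      ih _ (hs ▸ matchPlays_card hp) (s \ {p.1, p.2}) rfl
    constructor
    · rw [gameValue, dif_pos h, if_pos rfl]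
      refine Finset.sup_le fun p _ => ?_
      have h1 := drop p.1 p.2
      have h2 := (hrec p.1 p.2).2
      omega
    · have step : ∀ p ∈ matchPlays G s,
          gameValue G false s ≤ 1 + gameValue G true (s \ {p.1, p.2}) := by
        intro p hp
        rw [gameValue, dif_pos h, if_neg Bool.false_ne_true]
        exact Finset.inf'_le (fun p : {x // x ∈ matchPlays G s} =>
          1 + gameValue G true (s \ {p.1.1, p.1.2})) (mem_attach _ ⟨p, hp⟩)
      by_cases ht : 1 < (s ∩ T).card
      · -- Two clique vertices remain: Min plays the edge between them.
        obtain ⟨u, hu, v, hv, huv⟩ := one_lt_card.mp ht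
        rw [mem_inter] at hu hv
        have hp : (u, v) ∈ matchPlays G s := by
          simp only [matchPlays, mem_filter, mem_product]
          exact ⟨⟨hu.1, hv.1⟩, hT u hu.2 v hv.2 huv⟩
        have h1 := (key _ hp).1
        have h2 := (hrec _ hp).1
        have h3 := step _ hp
        simp only [hu.2, hv.2, if_true] at h1 h2 h3
        omega
      · -- At most one clique vertex remains, and any move uses it up.
        obtain ⟨p, hp⟩ := h
        have h1 := drop p hp
        have h2 := (hrec p hp).1
        have h3 := step p hp
        omega

/-- if `G` is a split graph with vertex set partitioned into an
independent set `S` and a clique `T`, then `Max(G) ≤ ⌈2|T|/3⌉`. -/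
theorem stmt8 {V : Type*} [Fintype V] [DecidableEq V] (G : SimpleGraph V)
    (S T : Finset V) (hunion : S ∪ T = Finset.univ) (hdisj : Disjoint S T)
    (hS : ∀ u ∈ S, ∀ v ∈ S, ¬ G.Adj u v)
    (hT : ∀ u ∈ T, ∀ v ∈ T, u ≠ v → G.Adj u v) :
    gameMax G ≤ (2 * T.card + 2) / 3 := by
  let _ : DecidableRel G.Adj := Classical.decRel _
  have hmeet : ∀ u v, G.Adj u v → u ∈ T ∨ v ∈ T := by
    intro u v huv
    by_contra! hcon
    have hmem : ∀ w, w ∉ T → w ∈ S := fun w hw =>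
      (mem_union.mp (hunion ▸ mem_univ w)).resolve_right hw
    exact hS u (hmem u hcon.1) v (hmem v hcon.2) huv
  have h := (gameValue_le_of_split G T hmeet hT _ univ rfl).1
  rwa [univ_inter] at h
end

section
/- If G is a finite simple graph on n vertices with minimum degree δ(G), then α'(G) ≥ min{⌊n/2⌋, δ(G)}. -/
/-!
Let `M` be a maximum matching and suppose `|M| < ⌊n/2⌋` and `|M| < δ(G)`. Since `M` covers at most
`2|M| ≤ n - 2` vertices, two distinct vertices `u`, `v` are uncovered. By maximality, all neighbours
of `u` and `v` are covered. Moreover, for an edge `xy ∈ M`, the edges `ux` and `vy` cannot both be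
present, as `xy` could then be replaced by `ux` and `vy`; likewise for `uy` and `vx`. Hence at most
two edges join `{u, v}` to `{x, y}` (`card_neighbors_le_two`). Summing over `M` gives
`deg u + deg v ≤ 2|M| < 2δ(G)`, a contradiction.
-/

open Finset

variable {V : Type*} [DecidableEq V]

lemma IsMatchingSet.insert_edge {G : SimpleGraph V} {M : Finset (Sym2 V)}
    (hM : IsMatchingSet G M) {a b : V} (hab : G.Adj a b)
    (ha : ∀ e ∈ M, a ∉ e) (hb : ∀ e ∈ M, b ∉ e) :
    IsMatchingSet G (insert s(a, b) M) ∧ (insert s(a, b) M).card = M.card + 1 := by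
  refine ⟨⟨?_, ?_⟩, ?_⟩
  · intro e he
    rcases mem_insert.mp he with rfl | he
    · exact hab
    · exact hM.1 e he
  · intro e he f hf hef w hwe hwf
    rcases mem_insert.mp he with rfl | heM <;> rcases mem_insert.mp hf with rfl | hfM
    · exact hef rfl
    · rcases Sym2.mem_iff.mp hwe with rfl | rfl
      · exact ha f hfM hwf
      · exact hb f hfM hwf
    · rcases Sym2.mem_iff.mp hwf with rfl | rfl
      · exact ha e heM hwe
      · exact hb e heM hwe
    · exact hM.2 e heM f hfM hef w hwe hwf
  · exact card_insert_of_notMem fun h => ha _ h (Sym2.mem_mk_left a b)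

/-- Exchange step: in a maximum matching no edge `xy` can be replaced by `ux` and `vy` with `u`, `v`
uncovered. -/
lemma no_augmenting_exchange {G : SimpleGraph V} {M : Finset (Sym2 V)}
    (hM : IsMatchingSet G M) (hmax : ∀ M', IsMatchingSet G M' → M'.card ≤ M.card)
    {u v x y : V} (huv : u ≠ v) (hu : ∀ e ∈ M, u ∉ e) (hv : ∀ e ∈ M, v ∉ e)
    (hxy : s(x, y) ∈ M) (hux : G.Adj u x) (hvy : G.Adj v y) : False := by
  have hne : x ≠ y := G.ne_of_adj (hM.1 _ hxy)
  have hux' : u ≠ y := fun h => hu _ hxy (h ▸ Sym2.mem_mk_right x y)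
  have hvx' : v ≠ x := fun h => hv _ hxy (h ▸ Sym2.mem_mk_left x y)
  have hE : IsMatchingSet G (M.erase s(x, y)) :=
    ⟨fun e he => hM.1 e (mem_of_mem_erase he), fun e he f hf =>
      hM.2 e (mem_of_mem_erase he) f (mem_of_mem_erase hf)⟩
  -- The endpoints of `xy` are uncovered once `xy` is removed.
  have hfree : ∀ z ∈ s(x, y), ∀ e ∈ M.erase s(x, y), z ∉ e := fun z hz e he =>
    hM.2 _ hxy e (mem_of_mem_erase he) (ne_of_mem_erase he).symm z hz
  obtain ⟨h1, c1⟩ := hE.insert_edge hvy (fun e he => hv e (mem_of_mem_erase he))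
    (hfree y (Sym2.mem_mk_right x y))
  obtain ⟨h2, c2⟩ := h1.insert_edge hux
    (by
      intro e he hue
      rcases mem_insert.mp he with rfl | he
      · rcases Sym2.mem_iff.mp hue with h | h
        · exact huv h
        · exact hux' h
      · exact hu e (mem_of_mem_erase he) hue)
    (by
      intro e he hxe
      rcases mem_insert.mp he with rfl | he
      · rcases Sym2.mem_iff.mp hxe with h | h
        · exact hvx' h.symm
        · exact hne h
      · exact hfree x (Sym2.mem_mk_left x y) e he hxe)
  have := hmax _ h2
  have := card_erase_add_one hxy
  omega

/-- At most two edges join two uncovered vertices to the ends of an edge of a maximum matching. -/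
lemma card_neighbors_le_two {G : SimpleGraph V} [DecidableRel G.Adj] {M : Finset (Sym2 V)}
    (hM : IsMatchingSet G M) (hmax : ∀ M', IsMatchingSet G M' → M'.card ≤ M.card)
    {u v : V} (huv : u ≠ v) (hu : ∀ e ∈ M, u ∉ e) (hv : ∀ e ∈ M, v ∉ e)
    {e : Sym2 V} (he : e ∈ M) :
    (e.toFinset.filter (G.Adj u)).card + (e.toFinset.filter (G.Adj v)).card ≤ 2 := by
  induction e with
  | _ x y =>
    have hne : x ≠ y := G.ne_of_adj (hM.1 _ he)
    have h1 := no_augmenting_exchange (x := x) (y := y) hM hmax huv hu hv he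
    have h2 := no_augmenting_exchange (x := y) (y := x) hM hmax huv hu hv (Sym2.eq_swap ▸ he)
    have ht : (s(x, y)).toFinset = {x, y} := by ext; simp
    rw [ht]
    by_cases a : G.Adj u x <;> by_cases b : G.Adj u y <;>
      by_cases c : G.Adj v x <;> by_cases d : G.Adj v y <;>
      simp_all [filter_insert, filter_singleton]

/-- `α'(G) ≥ min {⌊n/2⌋, δ(G)}`. -/
theorem stmt9 {V : Type*} [Fintype V] [DecidableEq V] (G : SimpleGraph V)
    [DecidableRel G.Adj] :
    min (Fintype.card V / 2) G.minDegree ≤ matchingNumber G := by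
  -- The supremum defining `matchingNumber` is attained: the set is nonempty and bounded.
  have hbdd : BddAbove {n | ∃ M : Finset (Sym2 V), IsMatchingSet G M ∧ M.card = n} :=
    ⟨Fintype.card (Sym2 V), by rintro _ ⟨M, -, rfl⟩; exact card_le_univ M⟩
  have hmem : matchingNumber G ∈ {n | ∃ M : Finset (Sym2 V), IsMatchingSet G M ∧ M.card = n} :=
    Nat.sSup_mem ⟨0, ∅, ⟨by simp, by simp⟩, rfl⟩ hbdd
  obtain ⟨M, hM, hcard⟩ := hmem
  have hmax : ∀ M', IsMatchingSet G M' → M'.card ≤ M.card := fun M' h =>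
    hcard ▸ le_csSup hbdd ⟨M', h, rfl⟩
  rw [← hcard]
  by_contra! hlt
  obtain ⟨hn, hδ⟩ := lt_min_iff.mp hlt
  have hC : (M.biUnion Sym2.toFinset).card ≤ M.card * 2 :=
    card_biUnion_le_card_mul _ _ _ fun e _ => by
      rw [Sym2.card_toFinset]; split_ifs <;> omega
  have hcompl : 1 < (M.biUnion Sym2.toFinset)ᶜ.card := by
    rw [card_compl]; omega
  obtain ⟨u, hu, v, hv, huv⟩ := one_lt_card.mp hcompl
  have hu' : ∀ e ∈ M, u ∉ e := by simpa using hu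
  have hv' : ∀ e ∈ M, v ∉ e := by simpa using hv
  have hdeg : ∀ w, (∀ e ∈ M, w ∉ e) →
      G.degree w ≤ ∑ e ∈ M, (e.toFinset.filter (G.Adj w)).card := by
    intro w hw
    refine le_trans (card_le_card ?_) card_biUnion_le
    intro z hz
    have hz' : G.Adj w z := by simpa using hz
    by_contra hcon
    have hzM : ∀ e ∈ M, z ∉ e := fun e he hze =>
      hcon (mem_biUnion.mpr ⟨e, he, by simp [hze, hz']⟩)
    obtain ⟨h, c⟩ := hM.insert_edge hz' hw hzM
    have := hmax _ h
    omega
  have hsum : ∑ e ∈ M, ((e.toFinset.filter (G.Adj u)).card +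
      (e.toFinset.filter (G.Adj v)).card) ≤ M.card * 2 :=
    sum_le_card_nsmul _ _ _ fun e he => card_neighbors_le_two hM hmax huv hu' hv' he
  rw [sum_add_distrib] at hsum
  have := hdeg u hu'
  have := hdeg v hv'
  have := G.minDegree_le_degree u
  have := G.minDegree_le_degree v
  omega
end
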